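/- arXiv:math/0703520 — 3 statements merged into one kernel-verified Lean document; each statement's English description precedes it below -/
import Mathlib

section
/- For the one-variable modified Bessel function j_κ(z) = ₀F₁(κ+1; -z²/4) = Γ(κ+1) ∑_{n≥0} (-1)ⁿ (z/2)^{2n} / (n! Γ(n+κ+1)), there is a constant C > 0 such that for all μ > 3 and all x ≥ 0: |j_{μ-1}(2√(μx)) - e^{-x}| ≤ (C/μ)·min(1, x²). -/
/-- The one-variable modified Bessel function
`j_κ(z) = ₀F₁(κ+1; -z²/4) = Γ(κ+1) ∑_{n≥0} (-1)ⁿ (z/2)^{2n} / (n! Γ(n+κ+1))`. -/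
noncomputable def besselJSmall (κ z : ℝ) : ℝ :=
  Real.Gamma (κ + 1) *
    ∑' n : ℕ, (-1 : ℝ) ^ n * (z / 2) ^ (2 * n) / ((n.factorial : ℝ) * Real.Gamma (n + κ + 1))

noncomputable def hB (ν y : ℝ) : ℝ :=
  ∑' n : ℕ, (-1 : ℝ) ^ n * y ^ n / ((n.factorial : ℝ) * Real.Gamma (n + ν))

lemma hB_gamma_le {ν : ℝ} (hν : 2 ≤ ν) (n : ℕ) : Real.Gamma ν ≤ Real.Gamma (n + ν) := by
  apply Real.Gamma_strictMonoOn_Ici.monotoneOn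
  · exact hν
  · show (2:ℝ) ≤ n + ν
    have : (0:ℝ) ≤ n := Nat.cast_nonneg n
    linarith
  · have : (0:ℝ) ≤ n := Nat.cast_nonneg n
    linarith

lemma hB_term_le {ν y R : ℝ} (hν : 2 ≤ ν) (hy : |y| ≤ R) (n : ℕ) :
    ‖(-1 : ℝ) ^ n * y ^ n / ((n.factorial : ℝ) * Real.Gamma (n + ν))‖ ≤
      R ^ n / n.factorial * (Real.Gamma ν)⁻¹ := by
  have h1 := hB_gamma_le hν n
  have h0 : 0 < Real.Gamma ν := Real.Gamma_pos_of_pos (by linarith)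
  have h2 : 0 < Real.Gamma (n + ν) := lt_of_lt_of_le h0 h1
  have hf : (0:ℝ) < n.factorial := by exact_mod_cast n.factorial_pos
  rw [norm_div, norm_mul, norm_pow, norm_pow, norm_mul, norm_neg, norm_one, one_pow, one_mul,
    Real.norm_eq_abs, Real.norm_eq_abs, Real.norm_eq_abs, abs_of_pos hf, abs_of_pos h2,
    ← div_eq_mul_inv, div_div]
  have hR : 0 ≤ R := (abs_nonneg y).trans hy
  gcongr

lemma hB_summable {ν : ℝ} (hν : 2 ≤ ν) (y : ℝ) :
    Summable fun n : ℕ => (-1 : ℝ) ^ n * y ^ n / ((n.factorial : ℝ) * Real.Gamma (n + ν)) :=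
  Summable.of_norm_bounded ((Real.summable_pow_div_factorial |y|).mul_right _)
    (fun n => hB_term_le hν le_rfl n)

lemma hB_deriv_succ (ν y : ℝ) (n : ℕ) :
    (-1 : ℝ) ^ (n+1) * (((n+1 : ℕ) : ℝ) * y ^ (n + 1 - 1)) /
      (((n+1).factorial : ℝ) * Real.Gamma ((n+1 : ℕ) + ν)) =
    -((-1 : ℝ) ^ n * y ^ n / ((n.factorial : ℝ) * Real.Gamma (n + (ν + 1)))) := by
  have hf : (n.factorial:ℝ) ≠ 0 := by exact_mod_cast n.factorial_ne_zero
  have e : (((n+1 : ℕ) : ℝ) + ν) = n + (ν + 1) := by push_cast; ring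
  have h1 : (((n+1 : ℕ)) : ℝ) ≠ 0 := by positivity
  rw [e, Nat.factorial_succ, Nat.cast_mul, pow_succ, Nat.add_sub_cancel]
  rw [show (-1:ℝ)^n * -1 * (((n+1:ℕ):ℝ) * y^n) = ((n+1:ℕ):ℝ) * (-((-1:ℝ)^n * y^n)) by ring,
    mul_assoc, mul_div_mul_left _ _ h1, neg_div]

lemma hB_hasDerivAt {ν : ℝ} (hν : 2 ≤ ν) (y : ℝ) : HasDerivAt (hB ν) (-(hB (ν + 1) y)) y := by
  set R := |y| + 1 with hR
  let u : ℕ → ℝ := fun n => Nat.casesOn n 0 (fun m => R ^ m / m.factorial * (Real.Gamma (ν+1))⁻¹)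
  have hu : Summable u := by
    rw [← summable_nat_add_iff 1]
    exact (Real.summable_pow_div_factorial R).mul_right _
  have key := hasDerivAt_tsum_of_isPreconnected (t := Metric.ball (0:ℝ) R) (u := u)
    (g := fun n y => (-1 : ℝ) ^ n * y ^ n / ((n.factorial : ℝ) * Real.Gamma (n + ν)))
    (g' := fun n y => (-1 : ℝ) ^ n * ((n:ℝ) * y ^ (n-1)) / ((n.factorial : ℝ) * Real.Gamma (n + ν)))
    (y₀ := 0) (y := y) hu Metric.isOpen_ball (convex_ball _ _).isPreconnected
    (fun n y _ => ((hasDerivAt_pow n y).const_mul _).div_const _)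
    (by
      intro n z hz
      have hz' : |z| ≤ R := by
        rw [mem_ball_zero_iff, Real.norm_eq_abs] at hz; exact hz.le
      cases n with
      | zero => simp [u]
      | succ m =>
        rw [hB_deriv_succ, norm_neg]
        exact hB_term_le (by linarith) hz' m)
    (by rw [mem_ball_zero_iff, norm_zero]; positivity)
    (hB_summable hν 0)
    (by rw [mem_ball_zero_iff, Real.norm_eq_abs]; linarith)
  have e : (∑' n : ℕ, (-1 : ℝ) ^ n * ((n:ℝ) * y ^ (n-1)) /
      ((n.factorial : ℝ) * Real.Gamma (n + ν))) = -(hB (ν + 1) y) := by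
    have hs : Summable fun n : ℕ => (-1 : ℝ) ^ n * ((n:ℝ) * y ^ (n-1)) /
      ((n.factorial : ℝ) * Real.Gamma (n + ν)) := by
      rw [← summable_nat_add_iff 1]
      simp_rw [hB_deriv_succ]
      exact (hB_summable (by linarith) y).neg
    rw [hs.tsum_eq_zero_add]
    simp_rw [hB_deriv_succ]
    rw [tsum_neg]
    simp [hB]
  rw [← e]
  exact key

lemma hB_contig {ν : ℝ} (hν : 2 ≤ ν) (y : ℝ) :
    hB ν y = ν * hB (ν + 1) y - y * hB (ν + 2) y := by
  have hs0 := hB_summable hν y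
  have hs1 := hB_summable (ν := ν + 1) (by linarith) y
  have hs2 := hB_summable (ν := ν + 2) (by linarith) y
  have hd : HasSum (fun n : ℕ => (-1 : ℝ) ^ n * y ^ n / ((n.factorial : ℝ) * Real.Gamma (n + ν))
      - ν * ((-1 : ℝ) ^ n * y ^ n / ((n.factorial : ℝ) * Real.Gamma (n + (ν+1)))))
      (hB ν y - ν * hB (ν+1) y) := hs0.hasSum.sub (hs1.hasSum.mul_left ν)
  have g : ∀ n : ℕ, Real.Gamma (n + (ν+1)) = (n + ν) * Real.Gamma (n + ν) := by
    intro n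
    have : (0:ℝ) ≤ n := Nat.cast_nonneg n
    rw [← add_assoc, Real.Gamma_add_one (by linarith)]
  have gp : ∀ n : ℕ, Real.Gamma (n + ν) ≠ 0 := by
    intro n
    have : (0:ℝ) ≤ n := Nat.cast_nonneg n
    exact (Real.Gamma_pos_of_pos (by linarith)).ne'
  have hd2 : HasSum (fun n : ℕ => (-1 : ℝ) ^ n * y ^ n / ((n.factorial : ℝ) * Real.Gamma (n + ν))
      - ν * ((-1 : ℝ) ^ n * y ^ n / ((n.factorial : ℝ) * Real.Gamma (n + (ν+1)))))
      (-(y * hB (ν+2) y)) := by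
    rw [← hasSum_nat_add_iff' 1]
    have h0 : ∑ i ∈ Finset.range 1, ((-1 : ℝ) ^ i * y ^ i / ((i.factorial : ℝ) * Real.Gamma (i + ν))
      - ν * ((-1 : ℝ) ^ i * y ^ i / ((i.factorial : ℝ) * Real.Gamma (i + (ν+1))))) = 0 := by
      have := gp 0
      have hν0 : ν ≠ 0 := by linarith
      simp only [Finset.range_one, Finset.sum_singleton, g]
      simp only [Nat.cast_zero, zero_add] at this ⊢
      simp
      field_simp
      simp
    rw [h0, sub_zero]
    have := (hs2.hasSum.mul_left y).neg
    refine this.congr_fun ?_ 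
    intro n
    have hf : (n.factorial:ℝ) ≠ 0 := by exact_mod_cast n.factorial_ne_zero
    have e : ((n : ℝ) + (ν + 2)) = ((n+1 : ℕ) : ℝ) + (ν + 1) := by push_cast; ring
    have h1 : (((n+1 : ℕ)) : ℝ) ≠ 0 := by positivity
    have h2 : (((n+1 : ℕ)) : ℝ) + ν ≠ 0 := by positivity
    have h3 := gp (n+1)
    rw [e, g, Nat.factorial_succ, Nat.cast_mul, pow_succ, pow_succ]
    generalize Real.Gamma (((n+1 : ℕ) : ℝ) + ν) = G at *
    generalize (((n+1 : ℕ)) : ℝ) = N at *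
    field_simp
    ring
  have := hd.unique hd2
  linarith

lemma hB_zero (ν : ℝ) : hB ν 0 = (Real.Gamma ν)⁻¹ := by
  unfold hB
  rw [tsum_eq_single 0]
  · simp
  · intro n hn
    simp [hn]

lemma anti_of_deriv {f f' : ℝ → ℝ} {a x : ℝ} (hx : a ≤ x)
    (hf : ∀ t, a ≤ t → HasDerivAt f (f' t) t) (hn : ∀ t, a ≤ t → f' t ≤ 0) : f x ≤ f a := by
  have : AntitoneOn f (Set.Ici a) := by
    apply antitoneOn_of_deriv_nonpos (convex_Ici a)
    · intro t ht; exact (hf t ht).continuousAt.continuousWithinAt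
    · intro t ht
      rw [interior_Ici] at ht
      exact (hf t ht.le).differentiableAt.differentiableWithinAt
    · intro t ht
      rw [interior_Ici] at ht
      rw [(hf t ht.le).deriv]; exact hn t ht.le
  exact this (Set.mem_Ici.2 le_rfl) hx hx

theorem abs_core (μ : ℝ) (hμ : 3 < μ) (A : ℕ → ℝ → ℝ)
    (hd : ∀ k t, HasDerivAt (A k) (-(A (k+1) t)) t)
    (hc : ∀ k t, μ * A k t = (μ + k) * A (k+1) t - t * A (k+2) t)
    (h0 : A 0 0 = 1) (x : ℝ) (hx : 0 ≤ x) :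
    |A 0 x - Real.exp (-x)| ≤ 4 / μ * min 1 (x^2) := by
  have hμ0 : 0 < μ := by linarith
  have hz : ∀ k, 0 ≤ A k 0 ∧ A k 0 ≤ 1 := by
    intro k
    induction k with
    | zero => rw [h0]; norm_num
    | succ k ih =>
      have h := hc k 0
      have hk : (0:ℝ) ≤ k := Nat.cast_nonneg k
      have e : A (k+1) 0 = μ * A k 0 / (μ + k) := by
        field_simp; linarith
      rw [e]
      refine ⟨div_nonneg (mul_nonneg hμ0.le ih.1) (by positivity), ?_⟩
      rw [div_le_one (by positivity)]
      nlinarith [ih.2]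
  have hb : ∀ k t, 0 ≤ t → |A k t| ≤ 1 := by
    intro k t ht
    have hk : (0:ℝ) ≤ k := Nat.cast_nonneg k
    have := anti_of_deriv (f := fun t => μ * (A k t)^2 + t * (A (k+1) t)^2)
      (f' := fun t => (1 - 2 * (μ + k)) * (A (k+1) t)^2) ht
      (by
        intro s _
        have := (((hd k s).pow 2).const_mul μ).add ((hasDerivAt_id s).mul ((hd (k+1) s).pow 2))
        refine this.congr_deriv ?_
        have := hc k s
        simp
        linear_combination (-2 * A (k+1) s) * this)
      (by
        intro s _
        have := sq_nonneg (A (k+1) s)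
        nlinarith)
    simp only [zero_mul, add_zero] at this
    have h1 : 0 ≤ t * (A (k+1) t)^2 := by positivity
    have h2 : (A k 0)^2 ≤ 1 := by nlinarith [hz k]
    have h3 : (A k t)^2 ≤ 1 := by
      have : μ * (A k t)^2 ≤ μ * 1 := by nlinarith
      exact le_of_mul_le_mul_left this hμ0
    exact abs_le_one_iff_mul_self_le_one.2 (by nlinarith)
  have hu : ∀ t, 0 ≤ t → |t * A 2 t| ≤ 4 := by
    intro t ht
    rcases le_total t 2 with h2 | h2
    · rw [abs_mul, abs_of_nonneg ht]
      nlinarith [hb 2 t ht, abs_nonneg (A 2 t)]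
    · have := anti_of_deriv
        (f := fun t => (t * A 2 t)^2 + t^2 / (μ * (t-1)) * (A 2 t - t * A 3 t)^2)
        (f' := fun t => (A 2 t - t * A 3 t)^2 * ((t^2 - 2 * t) / (μ * (t-1)^2) - 2 * t / (t-1))) h2
        (by
          intro s hs
          have hs1 : s - 1 ≠ 0 := by linarith
          have d1 := ((hasDerivAt_id s).mul (hd 2 s)).pow 2
          have d2 := ((hd 2 s).sub ((hasDerivAt_id s).mul (hd 3 s))).pow 2
          have d3 := ((hasDerivAt_id s).pow 2).div
            (((hasDerivAt_id s).sub_const 1).const_mul μ) (mul_ne_zero hμ0.ne' hs1)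
          refine (d1.add (d3.mul d2)).congr_deriv ?_
          have h := hc 2 s
          norm_num at h
          have h4 : s * A 4 s = (μ + 2) * A 3 s - μ * A 2 s := by linarith
          simp
          have e' : -A 3 s - (A 3 s + -(s * A 4 s)) = μ * (A 3 s - A 2 s) := by rw [h4]; ring
          simp only [e']
          field_simp
          ring)
        (by
          intro s hs
          apply mul_nonpos_of_nonneg_of_nonpos (sq_nonneg _)
          have hs1 : 0 < s - 1 := by linarith
          rw [sub_nonpos, div_le_div_iff₀ (by positivity) hs1]
          have : (s^2 - 2*s) ≤ 2 * s * (μ * (s-1)) := by nlinarith [mul_pos hμ0 hs1]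
          nlinarith)
      have b2 := abs_le.1 (hb 2 2 (by norm_num))
      have b3 := abs_le.1 (hb 3 2 (by norm_num))
      have hs1 : 0 < t - 1 := by linarith
      have p : 0 ≤ t^2 / (μ * (t-1)) * (A 2 t - t * A 3 t)^2 := by positivity
      have q : (2:ℝ)^2 / (μ * (2-1)) ≤ 4/3 := by
        rw [div_le_div_iff₀ (by linarith) (by norm_num)]; linarith
      have r : (A 2 2 - 2 * A 3 2)^2 ≤ 9 := by nlinarith
      have r' : (2 * A 2 2)^2 ≤ 4 := by nlinarith
      have : (2:ℝ)^2 / (μ * (2-1)) * (A 2 2 - 2 * A 3 2)^2 ≤ 4/3 * 9 := by gcongr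
      apply abs_le_of_sq_le_sq _ (by norm_num)
      linarith
  have hD : ∀ t, HasDerivAt (fun t => Real.exp t * A 0 t) (-(Real.exp t * (t * A 2 t / μ))) t := by
    intro t
    refine ((Real.hasDerivAt_exp t).mul (hd 0 t)).congr_deriv ?_
    have h := hc 0 t
    norm_num at h
    field_simp
    simp
    linear_combination h
  have main : ∀ (B B' : ℝ → ℝ), (∀ t, HasDerivAt B (B' t) t) → B 0 = 0 →
      (∀ t, 0 ≤ t → Real.exp t * |t * A 2 t| / μ ≤ B' t) → |Real.exp x * A 0 x - 1| ≤ B x := by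
    intro B B' hB hB0 hle
    have bd : ∀ t, 0 ≤ t → |Real.exp t * (t * A 2 t / μ)| ≤ B' t := by
      intro t ht
      rw [abs_mul, abs_div, abs_of_pos hμ0, abs_of_pos (Real.exp_pos t), ← mul_div_assoc]
      exact hle t ht
    have i1 := anti_of_deriv hx (fun t _ => (hD t).sub (hB t))
      (fun t ht => by have := abs_le.1 (bd t ht); linarith)
    have i2 := anti_of_deriv hx (fun t _ => ((hD t).neg).sub (hB t))
      (fun t ht => by have := abs_le.1 (bd t ht); linarith)
    simp [h0, hB0] at i1 i2
    rw [abs_le]; constructor <;> linarith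
  have f1 := main (fun t => 4 / μ * (Real.exp t - 1)) (fun t => 4/μ * Real.exp t)
    (fun t => ((Real.hasDerivAt_exp t).sub_const 1).const_mul _) (by simp)
    (fun t ht => by
      rw [div_mul_eq_mul_div]
      have := hu t ht
      gcongr ?_ / μ
      nlinarith [Real.exp_pos t])
  have f2 := main (fun t => 4 / μ * (Real.exp t * t^2)) (fun t => 4/μ * (Real.exp t * t^2 + Real.exp t * (2 * t)))
    (fun t => (((Real.hasDerivAt_exp t).mul ((hasDerivAt_pow 2 t))).const_mul _).congr_deriv (by simp)) (by simp)
    (fun t ht => by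
      rw [div_mul_eq_mul_div]
      have := hb 2 t ht
      rw [abs_mul, abs_of_nonneg ht]
      gcongr ?_ / μ
      have e := Real.exp_pos t
      have : Real.exp t * (t * |A 2 t|) ≤ Real.exp t * (t * 1) := by gcongr
      have : 0 ≤ Real.exp t * t := by positivity
      have : 0 ≤ Real.exp t * t^2 := by positivity
      nlinarith)
  have e : A 0 x - Real.exp (-x) = Real.exp (-x) * (Real.exp x * A 0 x - 1) := by
    rw [mul_sub, ← mul_assoc, ← Real.exp_add]; simp
  have ee : Real.exp (-x) * Real.exp x = 1 := by rw [← Real.exp_add]; simp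
  have ep := Real.exp_pos (-x)
  rw [e, abs_mul, abs_of_pos ep, mul_min_of_nonneg _ _ (by positivity)]
  apply le_min
  · calc _ ≤ Real.exp (-x) * (4 / μ * (Real.exp x - 1)) := by gcongr
      _ = 4 / μ * (Real.exp (-x) * Real.exp x - Real.exp (-x)) := by ring
      _ ≤ _ := by rw [ee]; gcongr; linarith
  · calc _ ≤ Real.exp (-x) * (4 / μ * (Real.exp x * x^2)) := by gcongr
      _ = 4 / μ * ((Real.exp (-x) * Real.exp x) * x^2) := by ring
      _ ≤ _ := by rw [ee, one_mul]

theorem stmt_9 :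
    ∃ C > 0, ∀ μ : ℝ, 3 < μ → ∀ x : ℝ, 0 ≤ x →
      |besselJSmall (μ - 1) (2 * Real.sqrt (μ * x)) - Real.exp (-x)| ≤
        C / μ * min 1 (x ^ 2) := by
  refine ⟨4, by norm_num, ?_⟩
  intro μ hμ x hx
  have hμ0 : 0 < μ := by linarith
  have hk : ∀ k : ℕ, (2:ℝ) ≤ μ + k := fun k => by
    have : (0:ℝ) ≤ k := Nat.cast_nonneg k
    linarith
  have key := abs_core μ hμ (fun k t => Real.Gamma μ * μ ^ k * hB (μ + k) (μ * t))
    (by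
      intro k t
      have h1 := (hB_hasDerivAt (hk k) (μ * t)).comp t ((hasDerivAt_id t).const_mul μ)
      refine (h1.const_mul (Real.Gamma μ * μ ^ k)).congr_deriv ?_
      push_cast
      rw [← add_assoc]
      ring)
    (by
      intro k t
      have := hB_contig (hk k) (μ * t)
      rw [this]
      push_cast
      rw [← add_assoc, ← add_assoc]
      ring)
    (by
      have := (Real.Gamma_pos_of_pos hμ0).ne'
      simp [hB_zero, this]) x hx
  have e : besselJSmall (μ - 1) (2 * Real.sqrt (μ * x)) =
      Real.Gamma μ * μ ^ 0 * hB (μ + (0:ℕ)) (μ * x) := by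
    unfold besselJSmall hB
    have : ∀ n : ℕ, (2 * Real.sqrt (μ * x) / 2) ^ (2 * n) = (μ * x)^n := by
      intro n
      rw [mul_div_cancel_left₀ _ (by norm_num : (2:ℝ) ≠ 0), pow_mul, Real.sq_sqrt (by positivity)]
    simp only [this]
    have e2 : ∀ n : ℕ, (n:ℝ) + (μ - 1) + 1 = n + μ := fun n => by ring
    simp [e2]
  rw [e]
  exact key
end

section
/- Let ν be a probability measure on Π_q (positive semidefinite q×q real symmetric matrices) with finite fourth moment ∫ ‖s‖⁴ dν(s) < ∞. Then ∫_{Π_q} e^{-tr(x s² x)} dν(s) = 1 - tr(x σ²(ν) x) + O(‖x‖⁴) as x → 0 in Π_q, where σ²(ν) = ∫ s² dν(s). -/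
open MeasureTheory Asymptotics

noncomputable instance {q : ℕ} : MeasurableSpace (Matrix (Fin q) (Fin q) ℝ) :=
  (inferInstance : MeasurableSpace ((Fin q) → (Fin q) → ℝ))

/-- The Frobenius (Hilbert–Schmidt) norm on matrices. -/
noncomputable instance {q : ℕ} : NormedAddCommGroup (Matrix (Fin q) (Fin q) ℝ) :=
  Matrix.frobeniusNormedAddCommGroup

noncomputable instance {q : ℕ} : NormedSpace ℝ (Matrix (Fin q) (Fin q) ℝ) :=
  Matrix.frobeniusNormedSpace

theorem aux_exp (t : ℝ) (ht : 0 ≤ t) : |Real.exp (-t) - 1 + t| ≤ t ^ 2 := by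
  have h1 := Real.add_one_le_exp (-t)
  have h2 := Real.add_one_le_exp t
  have h3 : Real.exp (-t) * Real.exp t = 1 := by rw [← Real.exp_add]; simp
  have h4 := Real.exp_pos (-t)
  have h5 : Real.exp (-t) * (1 + t) ≤ 1 := by nlinarith
  rw [abs_of_nonneg (by linarith)]
  by_contra hc
  push Not at hc
  have : 0 ≤ t ^ 3 := by positivity
  nlinarith

theorem aux_trace {q : ℕ} (x s : Matrix (Fin q) (Fin q) ℝ) (hx : x.PosSemidef)
    (hs : s.PosSemidef) : Matrix.trace (x * s ^ 2 * x) = ‖s * x‖ ^ 2 := by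
  have e : x * s ^ 2 * x = (s * x).transpose * (s * x) := by
    have h1 : x.transpose = x := by simpa using hx.isHermitian.eq
    have h2 : s.transpose = s := by simpa using hs.isHermitian.eq
    rw [Matrix.transpose_mul, h1, h2, pow_two]
    simp only [Matrix.mul_assoc]
  rw [e, Matrix.frobenius_norm_def, ← Real.sqrt_eq_rpow, Real.sq_sqrt (by positivity)]
  simp only [Matrix.trace, Matrix.diag, Matrix.mul_apply (M := (s * x).transpose),
    Matrix.transpose_apply]
  rw [Finset.sum_comm]
  refine Finset.sum_congr rfl fun i _ => Finset.sum_congr rfl fun j _ => ?_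
  simp [pow_two]

theorem aux_norm {q : ℕ} (s : Matrix (Fin q) (Fin q) ℝ) : ‖s ^ 2‖ ≤ ‖s‖ ^ 2 := by
  rw [pow_two, pow_two]; exact Matrix.frobenius_norm_mul s s

theorem aux_borel {q : ℕ} : BorelSpace (Matrix (Fin q) (Fin q) ℝ) :=
  (inferInstance : BorelSpace ((Fin q) → (Fin q) → ℝ))

theorem aux_cont {q : ℕ} : Continuous (fun s : Matrix (Fin q) (Fin q) ℝ => s ^ 2) := by
  simp only [pow_two]
  exact Continuous.matrix_mul continuous_id continuous_id

theorem aux_gen {E : Type*} [NormedAddCommGroup E] [NormedSpace ℝ E] [FiniteDimensional ℝ E]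
    [MeasurableSpace E] [BorelSpace E] (ν : Measure E) [IsProbabilityMeasure ν]
    (hmom : Integrable (fun s => ‖s‖ ^ 4) ν) (f : E → E) (hf : Continuous f)
    (hb : ∀ s, ‖f s‖ ≤ ‖s‖ ^ 2) (L : E →ₗ[ℝ] ℝ) :
    Integrable (fun s => L (f s)) ν ∧ ∫ s, L (f s) ∂ν = L (∫ s, f s ∂ν) := by
  have : CompleteSpace E := FiniteDimensional.complete ℝ E
  have : ProperSpace E := FiniteDimensional.proper ℝ E
  have hI : Integrable f ν := by
    refine Integrable.mono' (hmom.add (integrable_const (1 : ℝ))) hf.aestronglyMeasurable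
      (ae_of_all _ fun s => ?_)
    have := hb s
    simp only [Pi.add_apply]
    nlinarith [sq_nonneg (‖s‖ ^ 2 - 1), sq_nonneg (‖s‖)]
  exact ⟨(LinearMap.toContinuousLinearMap L).integrable_comp hI,
    (LinearMap.toContinuousLinearMap L).integral_comp_comm hI⟩

/-- The functional `a ↦ tr (x a x)`. -/
noncomputable def auxL {q : ℕ} (x : Matrix (Fin q) (Fin q) ℝ) :
    Matrix (Fin q) (Fin q) ℝ →ₗ[ℝ] ℝ where
  toFun a := Matrix.trace (x * a * x)
  map_add' a b := by simp [mul_add, add_mul]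
  map_smul' c a := by simp

theorem stmt_14 (q : ℕ) (ν : Measure (Matrix (Fin q) (Fin q) ℝ)) [IsProbabilityMeasure ν]
    (hsupp : ∀ᵐ s ∂ν, s.PosSemidef)
    (hmom : Integrable (fun s => ‖s‖ ^ 4) ν)
    (σ2 : Matrix (Fin q) (Fin q) ℝ) (hσ2 : σ2 = ∫ s, s ^ 2 ∂ν) :
    (fun x : Matrix (Fin q) (Fin q) ℝ =>
        (∫ s, Real.exp (-(Matrix.trace (x * s ^ 2 * x))) ∂ν) -
          (1 - Matrix.trace (x * σ2 * x)))
      =O[nhdsWithin 0 {x : Matrix (Fin q) (Fin q) ℝ | x.PosSemidef}]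
      (fun x => ‖x‖ ^ 4) := by
  refine IsBigO.of_bound (∫ s, ‖s‖ ^ 4 ∂ν) ?_
  filter_upwards [self_mem_nhdsWithin] with x hx
  have hx' : x.PosSemidef := hx
  have hG := @aux_gen (Matrix (Fin q) (Fin q) ℝ) _ _ inferInstance _ aux_borel ν _ hmom
    (fun s => s ^ 2) aux_cont aux_norm (auxL x)
  have hLI : Integrable (fun s => Matrix.trace (x * s ^ 2 * x)) ν := hG.1
  have hLe : ∫ s, Matrix.trace (x * s ^ 2 * x) ∂ν = Matrix.trace (x * σ2 * x) := by
    rw [hσ2]; exact hG.2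
  have hE : Integrable (fun s => Real.exp (-(Matrix.trace (x * s ^ 2 * x)))) ν := by
    refine Integrable.mono' (integrable_const (1 : ℝ))
      (Real.continuous_exp.comp_aestronglyMeasurable hLI.aestronglyMeasurable.neg) ?_
    filter_upwards [hsupp] with s hs
    rw [Real.norm_eq_abs, Real.abs_exp, Real.exp_le_one_iff, aux_trace x s hx' hs]
    have := sq_nonneg ‖s * x‖
    linarith
  have key : (∫ s, Real.exp (-(Matrix.trace (x * s ^ 2 * x))) ∂ν) -
          (1 - Matrix.trace (x * σ2 * x)) =
      ∫ s, (Real.exp (-(Matrix.trace (x * s ^ 2 * x))) - 1 + Matrix.trace (x * s ^ 2 * x)) ∂ν := by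
    rw [integral_add (f := fun s => Real.exp (-(Matrix.trace (x * s ^ 2 * x))) - 1)
      (hE.sub (integrable_const 1)) hLI, integral_sub hE (integrable_const 1), hLe]
    simp
    ring
  rw [key, norm_pow, norm_norm, ← integral_mul_const]
  refine norm_integral_le_of_norm_le (hmom.mul_const _) ?_
  filter_upwards [hsupp] with s hs
  have ht := aux_trace x s hx' hs
  rw [ht, Real.norm_eq_abs]
  refine (aux_exp _ (sq_nonneg _)).trans ?_
  have hm : ‖s * x‖ ≤ ‖s‖ * ‖x‖ := Matrix.frobenius_norm_mul s x
  calc (‖s * x‖ ^ 2) ^ 2 = ‖s * x‖ ^ 4 := by ring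
    _ ≤ (‖s‖ * ‖x‖) ^ 4 := by gcongr
    _ = _ := by ring
end

section
/- Let ν be a probability measure on [0,∞) with finite second moment σ² = ∫ s² dν(s) ∈ (0,∞), and let (μ_k) ⊂ (1/2,∞) with μ_k → ∞. For each k let S_k be distributed according to the k-fold convolution power ν^{(k,μ_k)} of ν under the Bessel–Kingman convolution of index μ_k on [0,∞) (i.e. the hypergroup convolution whose characters are s ↦ j_{μ_k-1}(st)). Then S_k/√k → σ in probability as k → ∞. -/
open MeasureTheory

/-- The normalization constant `κ_μ = ∫_{-1}^1 (1 - v²)^{μ - 3/2} dv`. -/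
noncomputable def kappaConst (μ : ℝ) : ℝ :=
  ∫ v in (-1 : ℝ)..1, (1 - v ^ 2) ^ (μ - 3 / 2)

/-- The Bessel–Kingman convolution of two point measures `δ_r *_μ δ_s`, given by
`(δ_r *_μ δ_s)(f) = (1/κ_μ) ∫_{-1}^1 f(√(r² + s² + 2rsv)) (1-v²)^{μ-3/2} dv`. -/
noncomputable def kingmanPointConv (μ r s : ℝ) : Measure ℝ :=
  Measure.map (fun v => Real.sqrt (r ^ 2 + s ^ 2 + 2 * r * s * v))
    ((ENNReal.ofReal (kappaConst μ)⁻¹) •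
      ((volume.restrict (Set.Ioo (-1 : ℝ) 1)).withDensity
        (fun v => ENNReal.ofReal ((1 - v ^ 2) ^ (μ - 3 / 2)))))

/-- One convolution step: `P ↦ P *_μ ν`. -/
noncomputable def kingmanConvStep (μ : ℝ) (ν P : Measure ℝ) : Measure ℝ :=
  P.bind fun r => ν.bind fun s => kingmanPointConv μ r s

/-- The `k`-fold Bessel–Kingman convolution power `ν^{(k,μ)}` of `ν`,
i.e. the distribution of the `k`-th step `S_k` of the Bessel–Kingman random
walk of index `μ` with law `ν`, started at `0`. -/
noncomputable def kingmanConvPower (μ : ℝ) (ν : Measure ℝ) (k : ℕ) : Measure ℝ :=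
  (kingmanConvStep μ ν)^[k] (Measure.dirac 0)

noncomputable def vm (μ : ℝ) : Measure ℝ := (ENNReal.ofReal (kappaConst μ)⁻¹) •
      ((volume.restrict (Set.Ioo (-1 : ℝ) 1)).withDensity
        (fun v => ENNReal.ofReal ((1 - v ^ 2) ^ (μ - 3 / 2))))

lemma cont_w (a : ℝ) (ha : 0 ≤ a) : Continuous (fun v : ℝ => (1 - v ^ 2) ^ a) := by
  exact (by fun_prop : Continuous fun v : ℝ => 1 - v ^ 2).rpow_const (fun x => Or.inr ha)

lemma kappa_pos (μ : ℝ) (hμ : 3 / 2 ≤ μ) : 0 < kappaConst μ := by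
  unfold kappaConst
  apply intervalIntegral.intervalIntegral_pos_of_pos_on
  · exact (cont_w _ (by linarith)).intervalIntegrable _ _
  · intro x hx
    apply Real.rpow_pos_of_pos
    nlinarith [hx.1, hx.2]
  · norm_num

lemma meas_w (a : ℝ) : Measurable (fun v : ℝ => (1 - v ^ 2) ^ a) := by fun_prop

lemma vm_integral (μ : ℝ) (hμ : 3 / 2 ≤ μ) (f : ℝ → ℝ) :
    ∫ v, f v ∂(vm μ) = (kappaConst μ)⁻¹ * ∫ v in (-1 : ℝ)..1, (1 - v ^ 2) ^ (μ - 3 / 2) * f v := by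
  unfold vm
  rw [integral_smul_measure, ENNReal.toReal_ofReal (inv_nonneg.2 (kappa_pos μ hμ).le), smul_eq_mul,
    integral_withDensity_eq_integral_toReal_smul (meas_w _).ennreal_ofReal (by simp),
    intervalIntegral.integral_of_le (by norm_num), integral_Ioc_eq_integral_Ioo]
  congr 1
  apply setIntegral_congr_fun measurableSet_Ioo
  intro v hv
  simp only [smul_eq_mul]
  rw [ENNReal.toReal_ofReal]
  apply Real.rpow_nonneg
  nlinarith [hv.1, hv.2]

lemma vm_ae (μ : ℝ) : ∀ᵐ v ∂(vm μ), |v| ≤ 1 := by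
  unfold vm
  apply Measure.ae_smul_measure
  apply (withDensity_absolutelyContinuous _ _).ae_le
  filter_upwards [ae_restrict_mem measurableSet_Ioo] with v hv
  exact abs_le.2 ⟨hv.1.le, hv.2.le⟩

lemma vm_prob (μ : ℝ) (hμ : 3 / 2 ≤ μ) : IsProbabilityMeasure (vm μ) := by
  have hk := kappa_pos μ hμ
  constructor
  unfold vm
  rw [Measure.smul_apply, withDensity_apply _ MeasurableSet.univ, Measure.restrict_univ,
    ← ofReal_integral_eq_lintegral_ofReal]
  · rw [← integral_Ioc_eq_integral_Ioo, ← intervalIntegral.integral_of_le (by norm_num), smul_eq_mul,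
      ← ENNReal.ofReal_mul (inv_nonneg.2 hk.le)]
    change ENNReal.ofReal ((kappaConst μ)⁻¹ * kappaConst μ) = 1
    rw [inv_mul_cancel₀ hk.ne']; simp
  · exact ((cont_w _ (by linarith)).integrableOn_Icc (a := -1) (b := 1)).mono_set Set.Ioo_subset_Icc_self
  · filter_upwards [ae_restrict_mem measurableSet_Ioo] with v hv
    apply Real.rpow_nonneg
    nlinarith [hv.1, hv.2]

lemma vm_int_of (μ : ℝ) (hμ : 3 / 2 ≤ μ) : Integrable (fun v : ℝ => v) (vm μ) ∧
    Integrable (fun v : ℝ => v ^ 2) (vm μ) := by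
  have := vm_prob μ hμ
  constructor
  · refine Integrable.of_bound (by fun_prop) 1 ?_
    simpa using vm_ae μ
  · refine Integrable.of_bound (by fun_prop) 1 ?_
    filter_upwards [vm_ae μ] with v hv
    simp only [norm_pow, Real.norm_eq_abs]
    exact pow_le_one₀ (abs_nonneg _) hv

lemma vm_mean (μ : ℝ) (hμ : 3 / 2 ≤ μ) : ∫ v, v ∂(vm μ) = 0 := by
  rw [vm_integral μ hμ]
  have h := intervalIntegral.integral_comp_neg (a := -1) (b := 1)
    (fun v : ℝ => (1 - v ^ 2) ^ (μ - 3 / 2) * v)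
  simp only [neg_neg, neg_sq, mul_neg, intervalIntegral.integral_neg] at h
  have : ∫ v in (-1 : ℝ)..1, (1 - v ^ 2) ^ (μ - 3 / 2) * v = 0 := by linarith
  rw [this, mul_zero]

lemma vm_var (μ : ℝ) (hμ : 3 / 2 ≤ μ) : ∫ v, v ^ 2 ∂(vm μ) ≤ 1 / (2 * μ - 1) := by
  rw [vm_integral μ hμ]
  have hk := kappa_pos μ hμ
  set a := μ - 3 / 2 with ha
  have ha0 : 0 ≤ a := by linarith
  have hc := cont_w a ha0
  have hc1 := cont_w (a + 1) (by linarith)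
  have h := intervalIntegral.integral_eq_sub_of_hasDerivAt (a := -1) (b := 1)
    (f := fun v : ℝ => v * (1 - v ^ 2) ^ (a + 1))
    (f' := fun v : ℝ => (1 - v ^ 2) ^ (a + 1) - 2 * (a + 1) * ((1 - v ^ 2) ^ a * v ^ 2))
    (by
      intro x _
      have h1 : HasDerivAt (fun v : ℝ => 1 - v ^ 2) (-(2 * x)) x := by
        simpa using (hasDerivAt_pow 2 x).const_sub 1
      have h2 := (hasDerivAt_id x).mul (h1.rpow_const (p := a + 1) (Or.inr (by linarith)))
      refine h2.congr_deriv ?_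
      simp only [id, add_sub_cancel_right]
      ring)
    (Continuous.intervalIntegrable (by fun_prop) _ _)
  rw [intervalIntegral.integral_sub (hc1.intervalIntegrable _ _)
    (Continuous.intervalIntegrable (by fun_prop) _ _), intervalIntegral.integral_const_mul] at h
  have hz : (0 : ℝ) ^ (a + 1) = 0 := Real.zero_rpow (by linarith)
  norm_num [hz] at h
  have hle : ∫ v in (-1 : ℝ)..1, (1 - v ^ 2) ^ (a + 1) ≤ kappaConst μ := by
    unfold kappaConst
    apply intervalIntegral.integral_mono_on (by norm_num) (hc1.intervalIntegrable _ _)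
      (hc.intervalIntegrable _ _)
    intro x hx
    apply Real.rpow_le_rpow_of_exponent_ge_of_imp
    · nlinarith [hx.1, hx.2]
    · nlinarith [hx.1, hx.2]
    · linarith
    · intro _ h; linarith
  rw [le_div_iff₀ (by linarith), inv_mul_eq_div, div_mul_eq_mul_div, div_le_one hk]
  have : 2 * (a + 1) = 2 * μ - 1 := by rw [ha]; ring
  rw [← this]
  linarith

noncomputable def qstep (p : (ℝ × ℝ) × (ℝ × ℝ)) : ℝ × ℝ :=
  (Real.sqrt (p.1.1 ^ 2 + p.2.1 ^ 2 + 2 * p.1.1 * p.2.1 * p.2.2), p.1.2 + p.2.1 ^ 2)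

lemma meas_qstep : Measurable qstep := by unfold qstep; fun_prop

noncomputable def qq (μ : ℝ) (ν : Measure ℝ) : ℕ → Measure (ℝ × ℝ)
  | 0 => Measure.dirac (0, 0)
  | n + 1 => ((qq μ ν n).prod (ν.prod (vm μ))).map qstep

lemma qq_prob (μ : ℝ) (hμ : 3 / 2 ≤ μ) (ν : Measure ℝ) [IsProbabilityMeasure ν] (n : ℕ) :
    IsProbabilityMeasure (qq μ ν n) := by
  have := vm_prob μ hμ
  induction n with
  | zero => unfold qq; infer_instance
  | succ n ih => unfold qq; exact Measure.isProbabilityMeasure_map meas_qstep.aemeasurable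

lemma step_eq (μ : ℝ) (hμ : 3 / 2 ≤ μ) (ν P : Measure ℝ) [IsProbabilityMeasure ν]
    [IsProbabilityMeasure P] :
    kingmanConvStep μ ν P = (P.prod (ν.prod (vm μ))).map
      (fun p => Real.sqrt (p.1 ^ 2 + p.2.1 ^ 2 + 2 * p.1 * p.2.1 * p.2.2)) := by
  have := vm_prob μ hμ
  have hm : Measurable (fun p : ℝ × ℝ => kingmanPointConv μ p.1 p.2) := by
    refine Measure.measurable_of_measurable_coe _ fun B hB => ?_
    have h1 : Measurable (fun q : (ℝ × ℝ) × ℝ =>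
      Real.sqrt (q.1.1 ^ 2 + q.1.2 ^ 2 + 2 * q.1.1 * q.1.2 * q.2)) := by fun_prop
    have h2 := measurable_measure_prodMk_left (ν := vm μ) (h1 hB)
    convert h2 using 2 with p
    exact Measure.map_apply (by fun_prop) hB
  have hm2 : Measurable (fun r : ℝ => ν.bind fun s => kingmanPointConv μ r s) := by
    refine Measure.measurable_of_measurable_coe _ fun B hB => ?_
    have h3 : ∀ r, (ν.bind fun s => kingmanPointConv μ r s) B = ∫⁻ s, kingmanPointConv μ r s B ∂ν :=
      fun r => Measure.bind_apply hB (hm.comp measurable_prodMk_left).aemeasurable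
    simp_rw [h3]
    exact Measurable.lintegral_prod_right' (f := fun p : ℝ × ℝ => kingmanPointConv μ p.1 p.2 B)
      ((Measure.measurable_coe hB).comp hm)
  ext B hB
  have h4 : Measurable (fun p : ℝ × ℝ × ℝ =>
    Real.sqrt (p.1 ^ 2 + p.2.1 ^ 2 + 2 * p.1 * p.2.1 * p.2.2)) := by fun_prop
  rw [Measure.map_apply h4 hB, Measure.prod_apply (h4 hB)]
  unfold kingmanConvStep
  rw [Measure.bind_apply hB hm2.aemeasurable]
  congr 1 with r
  have hm3 : Measurable (fun s => kingmanPointConv μ r s) := hm.comp measurable_prodMk_left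
  rw [Measure.bind_apply hB hm3.aemeasurable,
    Measure.prod_apply (measurable_prodMk_left (h4 hB))]
  congr 1 with s
  exact Measure.map_apply (by fun_prop) hB

lemma qq_fst (μ : ℝ) (hμ : 3 / 2 ≤ μ) (ν : Measure ℝ) [IsProbabilityMeasure ν] (n : ℕ) :
    kingmanConvPower μ ν n = (qq μ ν n).map Prod.fst := by
  have := vm_prob μ hμ
  induction n with
  | zero => simp [kingmanConvPower, qq, Measure.map_dirac' measurable_fst]
  | succ n ih =>
    have := qq_prob μ hμ ν n
    unfold kingmanConvPower at ih ⊢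
    rw [Function.iterate_succ_apply', ih]
    have : IsProbabilityMeasure ((qq μ ν n).map Prod.fst) :=
      Measure.isProbabilityMeasure_map (by fun_prop)
    have h := Measure.map_prod_map (qq μ ν n) (ν.prod (vm μ)) measurable_fst measurable_id
    rw [Measure.map_id] at h
    rw [step_eq μ hμ, qq, h, Measure.map_map (by fun_prop) (by fun_prop),
      Measure.map_map (by fun_prop) meas_qstep]
    rfl

lemma qq_snd (μ : ℝ) (hμ : 3 / 2 ≤ μ) (ν : Measure ℝ) [IsProbabilityMeasure ν] (n : ℕ) :
    (qq μ ν n).map Prod.snd = (Measure.infinitePi (fun _ : ℕ => ν)).map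
      (fun ω => ∑ i ∈ Finset.range n, ω i ^ 2) := by
  have := vm_prob μ hμ
  induction n with
  | zero => simp [qq, Measure.map_dirac' measurable_snd]
  | succ n ih =>
    have := qq_prob μ hμ ν n
    have h := Measure.map_prod_map (qq μ ν n) (ν.prod (vm μ)) measurable_snd
      (g := fun p => p.1 ^ 2) (by fun_prop)
    have h5 : (ν.prod (vm μ)).map (fun p => p.1 ^ 2) = ν.map (fun s => s ^ 2) := by
      have : (ν.prod (vm μ)).map Prod.fst = ν := by simp
      conv_rhs => rw [← this]
      rw [Measure.map_map (by fun_prop) (by fun_prop)]; rfl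
    have h6 : (qq μ ν (n + 1)).map Prod.snd = (((qq μ ν n).map Prod.snd).prod
        (ν.map (fun s => s ^ 2))).map (fun p => p.1 + p.2) := by
      rw [← h5, h, qq, Measure.map_map (by fun_prop) meas_qstep,
        Measure.map_map (by fun_prop) (by fun_prop)]
      rfl
    have hi := ProbabilityTheory.iIndepFun_infinitePi (P := fun _ : ℕ => ν)
      (X := fun _ s => s ^ 2) (fun _ => by fun_prop)
    have hi2 := hi.indepFun_finsetSum_of_notMem (fun i => by fun_prop)
      (Finset.notMem_range_self (n := n))
    rw [ProbabilityTheory.indepFun_iff_map_prod_eq_prod_map_map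
      (Measurable.aemeasurable (by fun_prop)) (Measurable.aemeasurable (by fun_prop))] at hi2
    have h7 : (Measure.infinitePi (fun _ : ℕ => ν)).map (fun ω => ω n ^ 2) = ν.map (fun s => s ^ 2) := by
      conv_rhs => rw [← Measure.infinitePi_map_eval (fun _ : ℕ => ν) n]
      rw [Measure.map_map (by fun_prop) (by fun_prop)]; rfl
    have h8 : (∑ j ∈ Finset.range n, fun ω : ℕ → ℝ => ω j ^ 2) =
      fun ω => ∑ i ∈ Finset.range n, ω i ^ 2 := by ext; simp
    rw [h6, ih, ← h7]
    rw [h8] at hi2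
    rw [← hi2, Measure.map_map (by fun_prop) (by fun_prop)]
    congr 1 with ω
    simp [Finset.sum_range_succ]

lemma int_of_sq {Ω : Type*} [MeasurableSpace Ω] (P : Measure Ω) [IsProbabilityMeasure P] (f : Ω → ℝ)
    (hf : Measurable f) (h : Integrable (fun x => f x ^ 2) P) : Integrable f P := by
  refine ((integrable_const (1 : ℝ)).add h).mono' hf.aestronglyMeasurable (ae_of_all _ fun x => ?_)
  simp only [Real.norm_eq_abs, Pi.add_apply]
  rw [abs_le]; constructor <;> nlinarith [sq_nonneg (f x - 1), sq_nonneg (f x + 1)]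

lemma int_mul {Ω : Type*} [MeasurableSpace Ω] (P : Measure Ω) (f g : Ω → ℝ)
    (hf : Measurable f) (hg : Measurable g) (h : Integrable (fun x => f x ^ 2) P)
    (h' : Integrable (fun x => g x ^ 2) P) : Integrable (fun x => f x * g x) P := by
  refine (h.add h').mono' (hf.mul hg).aestronglyMeasurable (ae_of_all _ fun x => ?_)
  simp only [Real.norm_eq_abs, Pi.add_apply]
  rw [abs_le]; constructor <;> nlinarith [sq_nonneg (f x - g x), sq_nonneg (f x + g x)]

lemma qq_mom (μ : ℝ) (hμ : 3 / 2 ≤ μ) (ν : Measure ℝ) [IsProbabilityMeasure ν]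
    (hmom : Integrable (fun s => s ^ 2) ν) (n : ℕ) :
    (∀ᵐ p ∂(qq μ ν n), 0 ≤ p.1) ∧
    Integrable (fun p : ℝ × ℝ => p.1 ^ 2) (qq μ ν n) ∧
    ∫ p, p.1 ^ 2 ∂(qq μ ν n) = n * ∫ s, s ^ 2 ∂ν ∧
    Integrable (fun p : ℝ × ℝ => (p.1 ^ 2 - p.2) ^ 2) (qq μ ν n) ∧
    ∫ p, (p.1 ^ 2 - p.2) ^ 2 ∂(qq μ ν n) ≤
      4 * n ^ 2 * (∫ s, s ^ 2 ∂ν) ^ 2 * ∫ v, v ^ 2 ∂(vm μ) := by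
  have := vm_prob μ hμ
  obtain ⟨hv1, hv2⟩ := vm_int_of μ hμ
  have hv0 := vm_mean μ hμ
  have hs1 := int_of_sq ν (fun s => s) measurable_id hmom
  induction n with
  | zero =>
    have e1 : Integrable (fun p : ℝ × ℝ => p.1 ^ 2) (qq μ ν 0) :=
      integrable_dirac (by simp)
    have e2 : Integrable (fun p : ℝ × ℝ => (p.1 ^ 2 - p.2) ^ 2) (qq μ ν 0) :=
      integrable_dirac (by simp)
    refine ⟨?_, e1, ?_, e2, ?_⟩
    · simp [qq]
    · simp [qq]
    · simp [qq]
  | succ n ih =>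
    have := qq_prob μ hμ ν n
    obtain ⟨-, i1, i2, i3, i4⟩ := ih
    have j1 := int_of_sq _ _ measurable_fst i1
    have j2 := int_mul (qq μ ν n) (fun p => p.1 ^ 2 - p.2) (fun p => p.1) (by fun_prop) (by fun_prop)
      i3 i1
    set M := ν.prod (vm μ) with hM
    have hxv : Integrable (fun q : ℝ × ℝ => q.1 * q.2) M := hs1.mul_prod hv1
    have hxv0 : ∫ q, q.1 * q.2 ∂M = 0 := by
      rw [hM, integral_prod_mul (fun x : ℝ => x) (fun x : ℝ => x), hv0, mul_zero]
    have hxxvv : Integrable (fun q : ℝ × ℝ => q.1 ^ 2 * q.2 ^ 2) M := hmom.mul_prod hv2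
    have hxxvv0 : ∫ q, q.1 ^ 2 * q.2 ^ 2 ∂M = (∫ s, s ^ 2 ∂ν) * ∫ v, v ^ 2 ∂(vm μ) := by
      rw [hM, integral_prod_mul (fun x : ℝ => x ^ 2) (fun x : ℝ => x ^ 2)]
    have hxx : Integrable (fun q : ℝ × ℝ => q.1 ^ 2) M := hmom.comp_fst _
    have hxx0 : ∫ q, q.1 ^ 2 ∂M = ∫ s, s ^ 2 ∂ν := by
      rw [hM, integral_fun_fst (fun x : ℝ => x ^ 2)]; simp
    have hae : ∀ᵐ p ∂((qq μ ν n).prod M), |p.2.2| ≤ 1 :=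
      (Measure.quasiMeasurePreserving_snd.ae
        (Measure.quasiMeasurePreserving_snd.ae (vm_ae μ)))
    have hsq : ∀ᵐ p ∂((qq μ ν n).prod M), (qstep p).1 ^ 2 =
        p.1.1 ^ 2 + p.2.1 ^ 2 + 2 * (p.1.1 * (p.2.1 * p.2.2)) := by
      filter_upwards [hae] with p hp
      unfold qstep
      rw [Real.sq_sqrt]
      · ring
      · have := abs_le.1 hp
        nlinarith [mul_nonneg (sub_nonneg.2 this.2) (sq_nonneg (p.1.1 - p.2.1)),
          mul_nonneg (by linarith : 0 ≤ 1 + p.2.2) (sq_nonneg (p.1.1 + p.2.1))]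
    have A1 : Integrable (fun p : (ℝ × ℝ) × (ℝ × ℝ) => p.1.1 ^ 2) ((qq μ ν n).prod M) :=
      i1.comp_fst _
    have A2 : Integrable (fun p : (ℝ × ℝ) × (ℝ × ℝ) => p.2.1 ^ 2) ((qq μ ν n).prod M) :=
      hxx.comp_snd _
    have A3 : Integrable (fun p : (ℝ × ℝ) × (ℝ × ℝ) => 2 * (p.1.1 * (p.2.1 * p.2.2)))
      ((qq μ ν n).prod M) := (j1.mul_prod hxv).const_mul 2
    have B1 : Integrable (fun p : (ℝ × ℝ) × (ℝ × ℝ) => (p.1.1 ^ 2 - p.1.2) ^ 2)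
      ((qq μ ν n).prod M) := i3.comp_fst _
    have B2 : Integrable (fun p : (ℝ × ℝ) × (ℝ × ℝ) =>
      4 * (((p.1.1 ^ 2 - p.1.2) * p.1.1) * (p.2.1 * p.2.2)))
      ((qq μ ν n).prod M) := (j2.mul_prod hxv).const_mul 4
    have B3 : Integrable (fun p : (ℝ × ℝ) × (ℝ × ℝ) => 4 * (p.1.1 ^ 2 * (p.2.1 ^ 2 * p.2.2 ^ 2)))
      ((qq μ ν n).prod M) := (i1.mul_prod hxxvv).const_mul 4
    have A12 : Integrable (fun p : (ℝ × ℝ) × (ℝ × ℝ) => p.1.1 ^ 2 + p.2.1 ^ 2)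
      ((qq μ ν n).prod M) := A1.add A2
    have B12 : Integrable (fun p : (ℝ × ℝ) × (ℝ × ℝ) => (p.1.1 ^ 2 - p.1.2) ^ 2 +
      4 * (((p.1.1 ^ 2 - p.1.2) * p.1.1) * (p.2.1 * p.2.2)))
      ((qq μ ν n).prod M) := B1.add B2
    have hD : ∀ᵐ p ∂((qq μ ν n).prod M), ((qstep p).1 ^ 2 - (qstep p).2) ^ 2 =
        (p.1.1 ^ 2 - p.1.2) ^ 2 + 4 * (((p.1.1 ^ 2 - p.1.2) * p.1.1) * (p.2.1 * p.2.2))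
        + 4 * (p.1.1 ^ 2 * (p.2.1 ^ 2 * p.2.2 ^ 2)) := by
      filter_upwards [hsq] with p hp
      rw [hp]
      simp only [qstep]
      ring
    refine ⟨?_, ?_, ?_, ?_, ?_⟩
    · rw [qq, ae_map_iff meas_qstep.aemeasurable (measurableSet_le measurable_const measurable_fst)]
      exact ae_of_all _ fun p => Real.sqrt_nonneg _
    · rw [qq, integrable_map_measure (Measurable.aestronglyMeasurable (by fun_prop))
        meas_qstep.aemeasurable]
      exact ((A1.add A2).add A3).congr (by filter_upwards [hsq] with p hp; exact hp.symm)
    · rw [qq, integral_map meas_qstep.aemeasurable (Measurable.aestronglyMeasurable (by fun_prop)),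
        integral_congr_ae hsq, integral_add A12 A3, integral_add A1 A2,
        integral_const_mul, integral_prod_mul (fun p : ℝ × ℝ => p.1) (fun q : ℝ × ℝ => q.1 * q.2),
        hxv0, integral_fun_fst (fun p : ℝ × ℝ => p.1 ^ 2),
        integral_fun_snd (fun p : ℝ × ℝ => p.1 ^ 2), hxx0, i2]
      simp
      ring
    · rw [qq, integrable_map_measure (Measurable.aestronglyMeasurable (by fun_prop))
        meas_qstep.aemeasurable]
      exact ((B1.add B2).add B3).congr (by filter_upwards [hD] with p hp; exact hp.symm)
    · rw [qq, integral_map meas_qstep.aemeasurable (Measurable.aestronglyMeasurable (by fun_prop)),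
        integral_congr_ae hD, integral_add B12 B3, integral_add B1 B2,
        integral_const_mul, integral_const_mul,
        integral_prod_mul (fun p : ℝ × ℝ => (p.1 ^ 2 - p.2) * p.1) (fun q : ℝ × ℝ => q.1 * q.2),
        integral_prod_mul (fun p : ℝ × ℝ => p.1 ^ 2) (fun q : ℝ × ℝ => q.1 ^ 2 * q.2 ^ 2),
        hxv0, integral_fun_fst (fun p : ℝ × ℝ => (p.1 ^ 2 - p.2) ^ 2), hxxvv0, i2]
      have hw : 0 ≤ ∫ v, v ^ 2 ∂(vm μ) := integral_nonneg fun v => sq_nonneg v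
      have h9 : 0 ≤ (∫ s, s ^ 2 ∂ν) ^ 2 * ∫ v, v ^ 2 ∂(vm μ) := mul_nonneg (sq_nonneg _) hw
      have hn : (0 : ℝ) ≤ n := n.cast_nonneg
      simp only [probReal_univ, one_smul, mul_zero, add_zero]
      push_cast
      nlinarith [mul_nonneg hn h9]

theorem stmt_17 (ν : Measure ℝ) [IsProbabilityMeasure ν]
    (hsupp : ν {s | s < 0} = 0)
    (hmom : Integrable (fun s => s ^ 2) ν) (hpos : 0 < ∫ s, s ^ 2 ∂ν)
    (μk : ℕ → ℝ) (hμk : ∀ k, 1 / 2 < μk k)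
    (hμtop : Filter.Tendsto μk Filter.atTop Filter.atTop) :
    ∀ ε > 0,
      Filter.Tendsto
        (fun k => kingmanConvPower (μk k) ν k
          {s : ℝ | ε ≤ |s / Real.sqrt k - Real.sqrt (∫ s, s ^ 2 ∂ν)|})
        Filter.atTop (nhds 0) := by
  intro ε hε
  set m := ∫ s, s ^ 2 ∂ν with hm
  have hσ : 0 < Real.sqrt m := Real.sqrt_pos.2 hpos
  set δ := ε * Real.sqrt m / 2 with hδ
  have hδ0 : 0 < δ := by positivity
  set RR := Measure.infinitePi (fun _ : ℕ => ν) with hR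
  -- law of large numbers
  have hmp : RR.map (fun ω => ω 0) = ν := Measure.infinitePi_map_eval (fun _ : ℕ => ν) 0
  have hLLN : ∀ᵐ ω ∂(RR), Filter.Tendsto (fun n : ℕ => (∑ i ∈ Finset.range n, ω i ^ 2) / (n : ℝ))
      Filter.atTop (nhds m) := by
    have mz : ∀ i : ℕ, AEMeasurable (fun ω : ℕ → ℝ => ω i) RR := fun i =>
      (measurable_pi_apply i).aemeasurable
    have h := ProbabilityTheory.strong_law_ae_real (μ := RR) (fun i ω => ω i ^ 2) ?_ ?_ ?_
    · have h2 : ∫ ω, ω 0 ^ 2 ∂(RR) = m := by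
        rw [hm]
        conv_rhs => rw [← hmp]
        rw [integral_map (mz 0) (by fun_prop)]
      rwa [h2] at h
    · rw [← hmp, integrable_map_measure (by fun_prop) (mz 0)] at hmom
      exact hmom
    · intro i j hij
      exact (ProbabilityTheory.iIndepFun_infinitePi (P := fun _ : ℕ => ν)
        (X := fun _ s => s ^ 2) (fun _ => by fun_prop)).indepFun hij
    · intro i
      have : ProbabilityTheory.IdentDistrib (fun ω : ℕ → ℝ => ω i) (fun ω : ℕ → ℝ => ω 0) RR RR :=
        ⟨mz i, mz 0, by
          rw [hmp]; exact Measure.infinitePi_map_eval (fun _ : ℕ => ν) i⟩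
      exact this.comp (u := fun s => s ^ 2) (by fun_prop)
  have hprob : Filter.Tendsto (fun n : ℕ => RR {ω | δ ≤ |(∑ i ∈ Finset.range n, ω i ^ 2) / (n : ℝ) - m|})
      Filter.atTop (nhds 0) := by
    have h := tendstoInMeasure_of_tendsto_ae (μ := RR)
      (f := fun (n : ℕ) (ω : ℕ → ℝ) => (∑ i ∈ Finset.range n, ω i ^ 2) / (n : ℝ)) (g := fun _ => m)
      (fun n => (Measurable.aestronglyMeasurable (by fun_prop))) hLLN
    rw [tendstoInMeasure_iff_norm] at h
    simpa only [Real.norm_eq_abs] using h δ hδ0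
  have hbd : Filter.Tendsto (fun k : ℕ => ENNReal.ofReal (4 * m ^ 2 / δ ^ 2 * (1 / (2 * μk k - 1))))
      Filter.atTop (nhds 0) := by
    have h1 : Filter.Tendsto (fun k => 2 * μk k - 1) Filter.atTop Filter.atTop :=
      Filter.tendsto_atTop_add_const_right _ _ (hμtop.const_mul_atTop two_pos)
    have h2 := (h1.inv_tendsto_atTop).const_mul (4 * m ^ 2 / δ ^ 2)
    simp only [mul_zero, Pi.inv_apply] at h2
    have h3 := ENNReal.tendsto_ofReal h2
    simpa only [one_div, ENNReal.ofReal_zero] using h3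
  have hsum := hbd.add hprob
  rw [add_zero] at hsum
  refine tendsto_of_tendsto_of_tendsto_of_le_of_le' tendsto_const_nhds hsum
    (Filter.Eventually.of_forall fun _ => zero_le) ?_
  filter_upwards [hμtop.eventually_ge_atTop (3 / 2), Filter.eventually_gt_atTop 0] with k hk hk0
  have hkR : (0 : ℝ) < k := Nat.cast_pos.2 hk0
  have hB : MeasurableSet {s : ℝ | ε ≤ |s / Real.sqrt k - Real.sqrt m|} :=
    measurableSet_le measurable_const (by fun_prop)
  have := qq_prob (μk k) hk ν k
  obtain ⟨h1, -, -, h4, h5⟩ := qq_mom (μk k) hk ν hmom k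
  rw [qq_fst _ hk, Measure.map_apply measurable_fst hB]
  have hsub : (Prod.fst ⁻¹' {s : ℝ | ε ≤ |s / Real.sqrt k - Real.sqrt m|} : Set (ℝ × ℝ)) ≤ᵐ[qq (μk k) ν k]
      ({p | (δ * k) ^ 2 ≤ (p.1 ^ 2 - p.2) ^ 2} ∪ Prod.snd ⁻¹' {t | δ ≤ |t / k - m|} : Set (ℝ × ℝ)) := by
    filter_upwards [h1] with p hp hpB
    change ε ≤ |p.1 / Real.sqrt k - Real.sqrt m| at hpB
    change (δ * k) ^ 2 ≤ (p.1 ^ 2 - p.2) ^ 2 ∨ δ ≤ |p.2 / k - m|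
    by_contra! hcon
    obtain ⟨c1, c2⟩ := hcon
    have c3 : |p.1 ^ 2 - p.2| < δ * k := by
      have := sq_lt_sq.1 c1
      rwa [abs_of_pos (a := δ * k) (by positivity)] at this
    have c4 : |p.1 ^ 2 / k - p.2 / k| < δ := by
      rw [← sub_div, abs_div, abs_of_pos hkR, div_lt_iff₀ hkR]; exact c3
    have c5 : |p.1 ^ 2 / k - m| < 2 * δ := by
      have := abs_sub_le (p.1 ^ 2 / k) (p.2 / k) m
      linarith
    have c6 : p.1 ^ 2 / k - m = (p.1 / Real.sqrt k - Real.sqrt m) * (p.1 / Real.sqrt k + Real.sqrt m) := by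
      have e1 := Real.sq_sqrt hkR.le
      have e2 := Real.sq_sqrt hpos.le
      have : p.1 ^ 2 / k = (p.1 / Real.sqrt k) ^ 2 := by rw [div_pow, e1]
      rw [this]; linear_combination e2
    have c7 : 0 ≤ p.1 / Real.sqrt k := by positivity
    rw [c6, abs_mul, abs_of_pos (a := _ + _) (by linarith)] at c5
    have : ε * Real.sqrt m ≤ |p.1 / Real.sqrt k - Real.sqrt m| * (p.1 / Real.sqrt k + Real.sqrt m) :=
      mul_le_mul hpB (by linarith) hσ.le (abs_nonneg _)
    linarith
  refine (measure_mono_ae hsub).trans ((measure_union_le _ _).trans (add_le_add ?_ ?_))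
  · have hc := mul_meas_ge_le_integral_of_nonneg (ae_of_all _ fun p => sq_nonneg _) h4 ((δ * k) ^ 2)
    rw [← ofReal_measureReal]
    apply ENNReal.ofReal_le_ofReal
    have hvv := vm_var (μk k) hk
    have h6 : (δ * k) ^ 2 * (qq (μk k) ν k).real {p | (δ * k) ^ 2 ≤ (p.1 ^ 2 - p.2) ^ 2} ≤
      4 * k ^ 2 * m ^ 2 * (1 / (2 * μk k - 1)) :=
      (hc.trans h5).trans (mul_le_mul_of_nonneg_left hvv (by positivity))
    rw [mul_comm, ← le_div_iff₀ (by positivity)] at h6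
    refine h6.trans (le_of_eq ?_)
    field_simp
  · rw [← Measure.map_apply measurable_snd (measurableSet_le measurable_const (by fun_prop)),
      qq_snd _ hk, Measure.map_apply (by fun_prop) (measurableSet_le measurable_const (by fun_prop))]
    exact le_rfl
end
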